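/- Let n ≥ 1 and let Φ_n : ℂ^n → ℂ^n be the map Φ_n(ζ_1, …, ζ_n) = ( x_1^{(n)}(ζ_1, …, ζ_n), …, x_n^{(n)}(ζ_1, …, ζ_n) ). Then the pushforward under Φ_n of the measure on ℂ^n with density ζ ↦ ∏_{j=1}^{n} (1 + |ζ_j|²)^{2(j−1)} with respect to Lebesgue measure λ equals Lebesgue measure λ; equivalently, for every nonnegative measurable f : ℂ^n → [0,∞], ∫_{ℂ^n} f(x) dλ(x) = ∫_{ℂ^n} f(Φ_n(ζ)) ∏_{j=1}^{n} (1 + |ζ_j|²)^{2(j−1)} dλ(ζ). -/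

import Mathlib

open MeasureTheory

/-- The singular part `(f)₋` of a Laurent series: the sum of its strictly
negative-degree terms. -/
noncomputable def singPart (f : LaurentSeries ℂ) : LaurentSeries ℂ where
  coeff k := if k < 0 then f.coeff k else 0
  isPWO_support' := by
    apply f.isPWO_support'.mono
    intro k hk
    simp only [Function.mem_support] at hk ⊢
    by_cases h : k < 0
    · simpa [h] using hk
    · simp [h] at hk

/-- The recursively defined Laurent polynomials `x⁽ᵏ⁾(ζ₁, …, ζ_k)`:
`x⁽¹⁾ = ζ₁ z⁻¹` and
`x⁽ᵏ⁺¹⁾ = ((1+|ζ_{k+1}|²) Σ_{p=0}^k conj(ζ_{k+1})^p (x⁽ᵏ⁾)^{p+1} z^{p(k+1)})₋ + ζ_{k+1} z^{−k−1}`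
(`ζ` is indexed starting at `1`; the base case is subsumed via `x⁽⁰⁾ = 0`). -/
noncomputable def xrec (ζ : ℕ → ℂ) : ℕ → LaurentSeries ℂ
  | 0 => 0
  | m + 1 =>
      singPart (HahnSeries.single (0 : ℤ) (((1 + ‖ζ (m + 1)‖ ^ 2 : ℝ) : ℂ)) *
          ∑ p ∈ Finset.range (m + 1),
            HahnSeries.single (0 : ℤ) ((starRingEnd ℂ (ζ (m + 1))) ^ p) *
              xrec ζ m ^ (p + 1) * HahnSeries.single ((p : ℤ) * ((m : ℤ) + 1)) 1)
        + HahnSeries.single (-(m : ℤ) - 1) (ζ (m + 1))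

/-- The map `Φ_n : ℂⁿ → ℂⁿ`, `Φ_n(ζ₁, …, ζ_n) = (x₁⁽ⁿ⁾(ζ), …, x_n⁽ⁿ⁾(ζ))`, where
`x_j⁽ⁿ⁾` is the coefficient of `z^{-j}` in `x⁽ⁿ⁾`. -/
noncomputable def Phi (n : ℕ) (ζ : Fin n → ℂ) : Fin n → ℂ :=
  fun j =>
    (xrec (fun i => if h : i - 1 < n ∧ 1 ≤ i then ζ ⟨i - 1, h.1⟩ else 0) n).coeff
      (-((j : ℕ) : ℤ) - 1)

/-!
The map `Phi n` is triangular. For `x` of order at least `-m` and `s` of order at least `m + 1`,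
the truncated geometric series `x + s x² + ⋯` differs from `x` by a perturbation of higher order.
So if `ζₘ₊₁ = ξₘ₊₁`, then step `m + 1` of the recursion multiplies the lowest coefficient of the
difference `xrec ζ m - xrec ξ m` by `1 + |ζₘ₊₁|²`. Hence `x_j` depends only on `ζ_j, …, ζₙ` and is
affine in `ζ_j` with slope `∏ k > j, (1 + |ζ_k|²)`. By Fubini, integrating out one coordinate at a
time, the Jacobian is the product of the squared slopes, in which `1 + |ζ_k|²` occurs with
exponent `2 (k - 1)`.
-/

open scoped ENNReal

section WithDensity

variable {α β γ δ : Type*} [MeasurableSpace α] [MeasurableSpace β] [MeasurableSpace γ]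
  [MeasurableSpace δ]

theorem measurePreserving_withDensity_iff {μ : Measure α} {ν : Measure β} {T : α → β}
    {ρ : α → ℝ≥0∞} (hT : Measurable T) (hρ : Measurable ρ) :
    MeasurePreserving T (μ.withDensity ρ) ν ↔
      ∀ f : β → ℝ≥0∞, Measurable f → ∫⁻ x, f (T x) * ρ x ∂μ = ∫⁻ y, f y ∂ν := by
  have lintegral_map_withDensity (f : β → ℝ≥0∞) (hf : Measurable f) :
      ∫⁻ y, f y ∂(μ.withDensity ρ).map T = ∫⁻ x, f (T x) * ρ x ∂μ := by
    simp_rw [mul_comm _ (ρ _)]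
    rw [lintegral_map hf hT]
    exact lintegral_withDensity_eq_lintegral_mul μ hρ (hf.comp hT)
  refine ⟨fun h f hf ↦ ?_, fun h ↦ ⟨hT, Measure.ext_of_lintegral _ fun f hf ↦ ?_⟩⟩
  · rw [← lintegral_map_withDensity f hf, h.map_eq]
  · rw [lintegral_map_withDensity f hf, h f hf]

theorem measurePreserving_skewProduct_withDensity {μa : Measure α} {μb : Measure β}
    {μc : Measure γ} {μd : Measure δ} [SFinite μc] [SFinite μd] {f : α → β}
    {g : α → γ → δ} {ρ : α → ℝ≥0∞} {σ : α → γ → ℝ≥0∞} (hρ : Measurable ρ)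
    (hgm : Measurable (Function.uncurry g)) (hσ : Measurable (Function.uncurry σ))
    (hf : MeasurePreserving f (μa.withDensity ρ) μb)
    (hg : ∀ a, MeasurePreserving (g a) (μc.withDensity (σ a)) μd) :
    MeasurePreserving (fun p : α × γ ↦ (f p.1, g p.1 p.2))
      ((μa.prod μc).withDensity fun p ↦ ρ p.1 * σ p.1 p.2) (μb.prod μd) := by
  have hT : Measurable fun p : α × γ ↦ (f p.1, g p.1 p.2) :=
    (hf.measurable.comp measurable_fst).prodMk hgm
  have hdens : Measurable fun p : α × γ ↦ ρ p.1 * σ p.1 p.2 :=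
    (hρ.comp measurable_fst).mul hσ
  refine (measurePreserving_withDensity_iff hT hdens).2 fun φ hφ ↦ ?_
  calc ∫⁻ p, φ (f p.1, g p.1 p.2) * (ρ p.1 * σ p.1 p.2) ∂μa.prod μc
    _ = ∫⁻ a, ∫⁻ c, φ (f a, g a c) * (ρ a * σ a c) ∂μc ∂μa :=
      lintegral_prod _ ((hφ.comp hT).mul hdens).aemeasurable
    _ = ∫⁻ a, (∫⁻ c, φ (f a, g a c) * σ a c ∂μc) * ρ a ∂μa := by
      refine lintegral_congr fun a ↦ ?_
      have hfiber : Measurable fun c ↦ φ (f a, g a c) * σ a c :=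
        (hφ.comp (measurable_const.prodMk hgm.of_uncurry_left)).mul hσ.of_uncurry_left
      rw [← lintegral_mul_const _ hfiber]
      exact lintegral_congr fun c ↦ by ring
    _ = ∫⁻ a, (∫⁻ d, φ (f a, d) ∂μd) * ρ a ∂μa := by
      refine lintegral_congr fun a ↦ congrArg (· * ρ a) ?_
      exact (measurePreserving_withDensity_iff hgm.of_uncurry_left hσ.of_uncurry_left).1 (hg a) _
        (hφ.comp measurable_prodMk_left)
    _ = ∫⁻ b, ∫⁻ d, φ (b, d) ∂μd ∂μb :=
      (measurePreserving_withDensity_iff hf.measurable hρ).1 hf _ hφ.lintegral_prod_right'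
    _ = ∫⁻ p, φ p ∂μb.prod μd := (lintegral_prod _ hφ.aemeasurable).symm

end WithDensity

section Triangular

variable {n : ℕ}

theorem measurePreserving_finCons {E : Fin (n + 1) → Type*} [∀ i, MeasurableSpace (E i)]
    (μ : ∀ i, Measure (E i)) [∀ i, SigmaFinite (μ i)] :
    MeasurePreserving (fun p : (∀ i : Fin n, E i.succ) × E 0 ↦ (Fin.cons p.2 p.1 : ∀ i, E i))
      ((Measure.pi fun i : Fin n ↦ μ i.succ).prod (μ 0)) (Measure.pi μ) := by
  have h := (measurePreserving_piFinSuccAbove μ 0).symm.comp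
    (Measure.measurePreserving_swap (μ := Measure.pi fun i : Fin n ↦ μ i.succ) (ν := μ 0))
  convert h using 1
  exact funext fun p ↦ (Fin.insertNth_zero p.2 p.1).symm

theorem measurePreserving_pi_cons {E F : Fin (n + 1) → Type*} [∀ i, MeasurableSpace (E i)]
    [∀ i, MeasurableSpace (F i)] {μ : ∀ i, Measure (E i)} {ν : ∀ i, Measure (F i)}
    [∀ i, SigmaFinite (μ i)] [∀ i, SigmaFinite (ν i)]
    {S : (∀ i : Fin n, E i.succ) → ∀ i : Fin n, F i.succ}
    {R : (∀ i : Fin n, E i.succ) → E 0 → F 0} {ρ : (∀ i : Fin n, E i.succ) → ℝ≥0∞}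
    {σ : (∀ i : Fin n, E i.succ) → E 0 → ℝ≥0∞} (hρ : Measurable ρ)
    (hRm : Measurable (Function.uncurry R)) (hσ : Measurable (Function.uncurry σ))
    (hS : MeasurePreserving S ((Measure.pi fun i : Fin n ↦ μ i.succ).withDensity ρ)
      (Measure.pi fun i : Fin n ↦ ν i.succ))
    (hR : ∀ y, MeasurePreserving (R y) ((μ 0).withDensity (σ y)) (ν 0)) :
    MeasurePreserving
      (fun x : ∀ i, E i ↦ (Fin.cons (R (Fin.tail x) (x 0)) (S (Fin.tail x)) : ∀ i, F i))
      ((Measure.pi μ).withDensity fun x ↦ ρ (Fin.tail x) * σ (Fin.tail x) (x 0))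
      (Measure.pi ν) := by
  have hcons := measurePreserving_finCons ν
  have hsplit : Measurable fun x : ∀ i, E i ↦ (Fin.tail x, x 0) := by
    unfold Fin.tail
    fun_prop
  have hskew := measurePreserving_skewProduct_withDensity hρ hRm hσ hS hR
  have hdens : Measurable fun p : (∀ i : Fin n, E i.succ) × E 0 ↦ ρ p.1 * σ p.1 p.2 :=
    (hρ.comp measurable_fst).mul hσ
  have hT := hcons.measurable.comp (hskew.measurable.comp hsplit)
  refine (measurePreserving_withDensity_iff hT (hdens.comp hsplit)).2 fun f hf ↦ ?_
  rw [← hcons.lintegral_comp hf, ← (measurePreserving_finCons μ).lintegral_comp]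
  · exact (measurePreserving_withDensity_iff hskew.measurable hdens).1 hskew _
      (hf.comp hcons.measurable)
  · exact (hf.comp hT).mul (hdens.comp hsplit)

theorem finCons_eqOn_Ici_succ {E : Fin (n + 1) → Type*} {i : Fin n} (t t' : E 0)
    {y y' : ∀ i : Fin n, E i.succ} (h : ∀ k ∈ Set.Ici i, y k = y' k) :
    ∀ k ∈ Set.Ici i.succ, (Fin.cons t y : ∀ i, E i) k = (Fin.cons t' y' : ∀ i, E i) k := by
  refine Fin.cases (fun hk ↦ ?_) fun k hk ↦ ?_
  · exact absurd hk (Fin.succ_pos i).not_ge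
  · simpa using h k (Fin.succ_le_succ_iff.1 hk)

theorem finCons_tail_eqOn_Ici_succ {E : Fin (n + 1) → Type*} (t : E 0) (x : ∀ i, E i)
    (i : Fin n) : ∀ k ∈ Set.Ici i.succ, (Fin.cons t (Fin.tail x) : ∀ i, E i) k = x k := by
  conv in x _ => rw [← Fin.cons_self_tail x]
  exact finCons_eqOn_Ici_succ _ _ fun _ _ ↦ rfl

theorem measurePreserving_pi_of_triangular {E : Fin n → Type*}
    [∀ i, MeasurableSpace (E i)] {μ ν : ∀ i, Measure (E i)} [∀ i, SigmaFinite (μ i)]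
    [∀ i, SigmaFinite (ν i)] {T : (∀ i, E i) → ∀ i, E i} {ρ : Fin n → (∀ i, E i) → ℝ≥0∞}
    (hT : Measurable T) (hρ : ∀ i, Measurable (ρ i))
    (hT_tri : ∀ i, DependsOn (fun x ↦ T x i) (Set.Ici i))
    (hρ_tri : ∀ i, DependsOn (ρ i) (Set.Ici i))
    (hT_fiber : ∀ i x, MeasurePreserving (fun t ↦ T (Function.update x i t) i)
      ((μ i).withDensity fun t ↦ ρ i (Function.update x i t)) (ν i)) :
    MeasurePreserving T ((Measure.pi μ).withDensity fun x ↦ ∏ i, ρ i x) (Measure.pi ν) := by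
  induction n with
  | zero =>
    rw [Measure.pi_of_empty μ, Measure.pi_of_empty ν, Subsingleton.elim T id]
    simp [MeasurePreserving.id]
  | succ n ih =>
    rcases isEmpty_or_nonempty (E 0) with hE | ⟨⟨t₀⟩⟩
    · have : IsEmpty (∀ i, E i) := isEmpty_pi.2 ⟨0, hE⟩
      exact .of_isEmpty ..
    -- The tail coordinates of `T` do not see the head, so it may be frozen at an arbitrary `t₀`.
    have cons_measurable : Measurable fun p : (∀ i : Fin n, E i.succ) × E 0 ↦
        (Fin.cons p.2 p.1 : ∀ i, E i) :=
      (measurePreserving_finCons μ).measurable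
    have cons_measurable' :
        Measurable fun y : ∀ i : Fin n, E i.succ ↦ (Fin.cons t₀ y : ∀ i, E i) :=
      cons_measurable.comp measurable_prodMk_right
    have head (y) : MeasurePreserving (fun t ↦ T (Fin.cons t y) 0)
        ((μ 0).withDensity fun t ↦ ρ 0 (Fin.cons t y)) (ν 0) := by
      simpa only [Fin.update_cons_zero] using hT_fiber 0 (Fin.cons t₀ y)
    have tail : MeasurePreserving (fun y (i : Fin n) ↦ T (Fin.cons t₀ y) i.succ)
        ((Measure.pi fun i : Fin n ↦ μ i.succ).withDensity fun y ↦
          ∏ i : Fin n, ρ i.succ (Fin.cons t₀ y))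
        (Measure.pi fun i : Fin n ↦ ν i.succ) := by
      refine ih (by fun_prop) (fun _ ↦ by fun_prop)
        (fun i _ _ h ↦ hT_tri i.succ (finCons_eqOn_Ici_succ t₀ t₀ h))
        (fun i _ _ h ↦ hρ_tri i.succ (finCons_eqOn_Ici_succ t₀ t₀ h)) fun i y ↦ ?_
      simpa only [Fin.cons_update] using hT_fiber i.succ (Fin.cons t₀ y)
    have key := measurePreserving_pi_cons (by fun_prop) (by fun_prop) (by fun_prop) tail head
    convert key using 2 with x
    · refine funext <| Fin.cases ?_ fun i ↦ ?_
      · rw [Fin.cons_zero, Fin.cons_self_tail]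
      · exact (hT_tri i.succ (finCons_tail_eqOn_Ici_succ t₀ x i)).symm
    · refine funext fun x ↦ ?_
      simp only [fun i ↦ hρ_tri _ (finCons_tail_eqOn_Ici_succ t₀ x i), Fin.cons_self_tail]
      rw [Fin.prod_univ_succ, mul_comm]

end Triangular

section Haar

open Module

theorem measurePreserving_smul_add {E : Type*} [NormedAddCommGroup E] [NormedSpace ℝ E]
    [FiniteDimensional ℝ E] [MeasurableSpace E] [BorelSpace E] (μ : Measure E)
    [μ.IsAddHaarMeasure] {r : ℝ} (hr : r ≠ 0) (b : E) :
    MeasurePreserving (fun x ↦ r • x + b) (ENNReal.ofReal |r ^ finrank ℝ E| • μ) μ := by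
  refine (measurePreserving_add_right μ b).comp ⟨measurable_const_smul r, ?_⟩
  rw [Measure.map_smul, Measure.map_addHaar_smul μ hr, smul_smul,
    ← ENNReal.ofReal_mul (abs_nonneg _), ← abs_mul,
    mul_inv_cancel₀ (pow_ne_zero _ hr), abs_one, ENNReal.ofReal_one, one_smul]

end Haar

section Products

theorem prod_Ioi_update {ι α M : Type*} [Preorder ι] [LocallyFiniteOrderTop ι] [DecidableEq ι]
    [CommMonoid M] (f : α → M) (x : ι → α) (i : ι) (t : α) :
    ∏ k ∈ Finset.Ioi i, f (Function.update x i t k) = ∏ k ∈ Finset.Ioi i, f (x k) :=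
  Finset.prod_congr rfl fun k hk ↦ by rw [Function.update_of_ne (Finset.mem_Ioi.1 hk).ne']

theorem prod_prod_Ioi_eq_prod_pow {M : Type*} [CommMonoid M] {n : ℕ} (g : Fin n → M) :
    ∏ j, ∏ k ∈ Finset.Ioi j, g k = ∏ k, g k ^ (k : ℕ) := by
  rw [Finset.prod_comm' (t' := Finset.univ) (s' := Finset.Iio) (by simp)]
  simp only [Finset.prod_const, Fin.card_Iio]

end Products

section TruncGeom

variable {R : Type*} [CommRing R]

/-- The truncation `x + s x² + ⋯ + sⁿ⁻¹ xⁿ` of the geometric series `x / (1 - s x)`. -/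
def truncGeom (n : ℕ) (s x : R) : R :=
  ∑ p ∈ Finset.range n, s ^ p * x ^ (p + 1)

theorem truncGeom_zero_right (n : ℕ) (s : R) : truncGeom n s 0 = 0 := by
  simp [truncGeom]

theorem truncGeom_succ_sub_sub (n : ℕ) (s x y : R) :
    truncGeom (n + 1) s x - truncGeom (n + 1) s y - (x - y) =
      (x - y) * ∑ p ∈ Finset.range n, ∑ i ∈ Finset.range (p + 2),
        (s * x) ^ i * (s * y) ^ (p + 1 - i) := by
  have hterm (p : ℕ) : s ^ (p + 1) * x ^ (p + 2) - s ^ (p + 1) * y ^ (p + 2) =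
      (x - y) * ∑ i ∈ Finset.range (p + 2), (s * x) ^ i * (s * y) ^ (p + 1 - i) := by
    rw [← mul_sub, ← geom_sum₂_mul, mul_comm (x - y), ← mul_assoc, Finset.mul_sum]
    refine congrArg (· * (x - y)) (Finset.sum_congr rfl fun i hi ↦ ?_)
    have hpow : s ^ (p + 1) = s ^ i * s ^ (p + 1 - i) := by
      rw [← pow_add, Nat.add_sub_cancel' (Nat.lt_succ_iff.1 (Finset.mem_range.1 hi))]
    rw [hpow, Nat.succ_sub_one]
    ring
  rw [Finset.mul_sum, ← Finset.sum_congr rfl fun p _ ↦ hterm p, Finset.sum_sub_distrib]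
  simp only [truncGeom, Finset.sum_range_succ' _ n]
  ring

variable {Γ₀ : Type*} [LinearOrderedAddCommMonoidWithTop Γ₀] (v : AddValuation R Γ₀)

theorem le_map_truncGeom_succ_sub_sub (n : ℕ) {s x y : R} {ε : Γ₀} (hε : 0 ≤ ε)
    (hx : ε ≤ v (s * x)) (hy : ε ≤ v (s * y)) :
    v (x - y) + ε ≤ v (truncGeom (n + 1) s x - truncGeom (n + 1) s y - (x - y)) := by
  rw [truncGeom_succ_sub_sub, v.map_mul]
  refine add_le_add_right (v.map_le_sum fun p _ ↦ v.map_le_sum fun i _ ↦ ?_) _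
  rw [v.map_mul, v.map_pow, v.map_pow]
  calc ε ≤ (p + 1) • ε := le_self_nsmul hε p.succ_ne_zero
    _ ≤ (i + (p + 1 - i)) • ε := nsmul_le_nsmul_left hε (by omega)
    _ = i • ε + (p + 1 - i) • ε := add_nsmul ..
    _ ≤ i • v (s * x) + (p + 1 - i) • v (s * y) := by gcongr

theorem le_map_truncGeom_succ (n : ℕ) {s x : R} (hx : 0 ≤ v (s * x)) :
    v x ≤ v (truncGeom (n + 1) s x) := by
  have h := le_map_truncGeom_succ_sub_sub v n le_rfl hx (y := 0) (by simp)
  rw [truncGeom_zero_right, sub_zero, sub_zero, add_zero] at h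
  simpa using v.map_le_add h le_rfl

end TruncGeom

section ContinuousFamilies

variable {X Γ R S : Type*} [AddCommMonoid Γ] [PartialOrder Γ] [IsOrderedCancelAddMonoid Γ]

/-- The ring homomorphism between rings of Hahn series which applies `φ` to every coefficient. -/
def hahnSeriesMapRingHom [Semiring R] [Semiring S] (φ : R →+* S) :
    HahnSeries Γ R →+* HahnSeries Γ S where
  toFun f := f.map φ
  map_one' := HahnSeries.map_one φ.toMonoidWithZeroHom
  map_mul' _ _ := HahnSeries.map_mul (φ : R →ₙ+* S)
  map_zero' := HahnSeries.map_zero (φ : ZeroHom R S)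
  map_add' _ _ := HahnSeries.map_add (φ : R →+ S)

variable [TopologicalSpace X] [CommRing R] [TopologicalSpace R] [IsTopologicalRing R]

variable (X Γ R) in
/-- The ring of continuous families of Hahn series: those which come from a single Hahn series with
coefficients in the ring of continuous functions on the parameter space. -/
noncomputable def continuousFamilies : Subring (X → HahnSeries Γ R) :=
  (RingHom.pi fun x ↦
    hahnSeriesMapRingHom (Γ := Γ) (ContinuousMap.evalAlgHom R R x : C(X, R) →+* R)).range

theorem continuous_coeff_of_mem_continuousFamilies {f : X → HahnSeries Γ R}
    (hf : f ∈ continuousFamilies X Γ R) (k : Γ) : Continuous fun x ↦ (f x).coeff k := by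
  obtain ⟨F, rfl⟩ := hf
  exact (F.coeff k).continuous

theorem single_mem_continuousFamilies {c : X → R} (hc : Continuous c) (k : Γ) :
    (fun x ↦ HahnSeries.single k (c x)) ∈ continuousFamilies X Γ R :=
  ⟨HahnSeries.single k ⟨c, hc⟩, funext fun _ ↦ HahnSeries.map_single (ZeroHomClass.toZeroHom _)⟩

theorem truncGeom_mem_continuousFamilies (n : ℕ) {s f : X → HahnSeries Γ R}
    (hs : s ∈ continuousFamilies X Γ R) (hf : f ∈ continuousFamilies X Γ R) :
    (fun x ↦ truncGeom n (s x) (f x)) ∈ continuousFamilies X Γ R := by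
  have h : truncGeom n s f ∈ continuousFamilies X Γ R :=
    sum_mem fun p _ ↦ mul_mem (pow_mem hs p) (pow_mem hf (p + 1))
  convert h using 1
  funext x
  simp only [truncGeom, Finset.sum_apply, Pi.mul_apply, Pi.pow_apply]

end ContinuousFamilies

section Recursion

theorem singPart_sub (f g : LaurentSeries ℂ) : singPart (f - g) = singPart f - singPart g :=
  map_sub (HahnSeries.truncLTLinearMap ℂ (0 : ℤ)) f g

theorem coeff_singPart_of_neg (f : LaurentSeries ℂ) {k : ℤ} (hk : k < 0) :
    (singPart f).coeff k = f.coeff k :=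
  if_pos hk

theorem orderTop_le_orderTop_singPart (f : LaurentSeries ℂ) :
    f.orderTop ≤ (singPart f).orderTop := by
  refine HahnSeries.le_orderTop_iff_forall.2 fun k hk ↦ ?_
  simp [singPart, HahnSeries.coeff_eq_zero_of_lt_orderTop hk]

variable {ζ ξ : ℕ → ℂ}

theorem xrec_succ (ζ : ℕ → ℂ) (m : ℕ) :
    xrec ζ (m + 1) =
      singPart (HahnSeries.single 0 ((1 + ‖ζ (m + 1)‖ ^ 2 : ℝ) : ℂ) *
        truncGeom (m + 1) (HahnSeries.single (m + 1 : ℤ) (starRingEnd ℂ (ζ (m + 1)))) (xrec ζ m))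
      + HahnSeries.single (-m - 1 : ℤ) (ζ (m + 1)) := by
  rw [xrec, truncGeom]
  congr! 4 with p
  rw [mul_right_comm, HahnSeries.single_mul_single, HahnSeries.single_pow, zero_add, mul_one,
    nsmul_eq_mul]

theorem one_le_orderTop_single_mul {m : ℕ} {f : LaurentSeries ℂ}
    (hf : ((-m : ℤ) : WithTop ℤ) ≤ f.orderTop) (a : ℂ) :
    1 ≤ (HahnSeries.single (m + 1 : ℤ) a * f).orderTop :=
  calc (1 : WithTop ℤ) = ((m + 1 : ℤ) : WithTop ℤ) + ((-m : ℤ) : WithTop ℤ) := by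
        norm_cast; omega
    _ ≤ (HahnSeries.single (m + 1 : ℤ) a).orderTop + f.orderTop :=
      add_le_add HahnSeries.orderTop_single_le hf
    _ ≤ (HahnSeries.single (m + 1 : ℤ) a * f).orderTop := HahnSeries.orderTop_add_le_mul

theorem le_orderTop_singPart_truncGeom {m : ℕ} {f : LaurentSeries ℂ}
    (hf : ((-m : ℤ) : WithTop ℤ) ≤ f.orderTop) (a b : ℂ) :
    ((-m : ℤ) : WithTop ℤ) ≤ (singPart (HahnSeries.single 0 b *
      truncGeom (m + 1) (HahnSeries.single (m + 1 : ℤ) a) f)).orderTop := by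
  have hgeom : f.orderTop ≤ (truncGeom (m + 1) (HahnSeries.single (m + 1 : ℤ) a) f).orderTop :=
    le_map_truncGeom_succ (HahnSeries.addVal ℤ ℂ) m
      (zero_le_one.trans (one_le_orderTop_single_mul hf a))
  rw [HahnSeries.single_zero_mul_eq_smul]
  exact hf.trans <| hgeom.trans <|
    (HahnSeries.orderTop_le_orderTop_smul b _).trans (orderTop_le_orderTop_singPart _)

theorem le_orderTop_xrec (ζ : ℕ → ℂ) (n : ℕ) :
    ((-n : ℤ) : WithTop ℤ) ≤ (xrec ζ n).orderTop := by
  induction n with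
  | zero => simp [xrec]
  | succ m ih =>
    rw [xrec_succ]
    refine (le_min ?_ ?_).trans HahnSeries.min_orderTop_le_orderTop_add
    · refine le_trans ?_ (le_orderTop_singPart_truncGeom ih _ _)
      norm_cast; omega
    · refine le_trans ?_ HahnSeries.orderTop_single_le
      norm_cast; omega

theorem coeff_xrec_succ_neg (ζ : ℕ → ℂ) (m : ℕ) :
    (xrec ζ (m + 1)).coeff (-m - 1) = ζ (m + 1) := by
  have hlow : ((-m - 1 : ℤ) : WithTop ℤ) < ((-m : ℤ) : WithTop ℤ) := by norm_cast; omega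
  rw [xrec_succ, HahnSeries.coeff_add, HahnSeries.coeff_single_same,
    HahnSeries.coeff_eq_zero_of_lt_orderTop
      (hlow.trans_le (le_orderTop_singPart_truncGeom (le_orderTop_xrec ζ m) _ _)), zero_add]

theorem coeff_xrec_succ_sub {m : ℕ} (h : ζ (m + 1) = ξ (m + 1)) {k : ℤ} (hk : k < 0)
    (hδ : (k : WithTop ℤ) ≤ (xrec ζ m - xrec ξ m).orderTop) :
    (xrec ζ (m + 1) - xrec ξ (m + 1)).coeff k =
      ((1 + ‖ζ (m + 1)‖ ^ 2 : ℝ) : ℂ) * (xrec ζ m - xrec ξ m).coeff k := by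
  set s : LaurentSeries ℂ := HahnSeries.single (m + 1 : ℤ) (starRingEnd ℂ (ζ (m + 1))) with hs
  set r := truncGeom (m + 1) s (xrec ζ m) - truncGeom (m + 1) s (xrec ξ m) -
    (xrec ζ m - xrec ξ m) with hr
  have hr_order : (k : WithTop ℤ) < r.orderTop :=
    calc (k : WithTop ℤ) < ((k + 1 : ℤ) : WithTop ℤ) := by norm_cast; omega
      _ = (k : WithTop ℤ) + 1 := by norm_cast
      _ ≤ (xrec ζ m - xrec ξ m).orderTop + 1 := by gcongr
      _ ≤ r.orderTop := le_map_truncGeom_succ_sub_sub (HahnSeries.addVal ℤ ℂ) m zero_le_one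
        (one_le_orderTop_single_mul (le_orderTop_xrec ζ m) _)
        (one_le_orderTop_single_mul (le_orderTop_xrec ξ m) _)
  rw [xrec_succ, xrec_succ, ← h, add_sub_add_right_eq_sub, ← singPart_sub, ← mul_sub,
    coeff_singPart_of_neg _ hk, HahnSeries.coeff_single_zero_mul, ← hs,
    ← sub_add_cancel (truncGeom _ s _ - _) (xrec ζ m - xrec ξ m), ← hr, HahnSeries.coeff_add,
    HahnSeries.coeff_eq_zero_of_lt_orderTop hr_order, zero_add]

theorem le_orderTop_xrec_succ_sub {m : ℕ} (h : ζ (m + 1) = ξ (m + 1)) {k : ℤ} (hk : k ≤ 0)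
    (hδ : (k : WithTop ℤ) ≤ (xrec ζ m - xrec ξ m).orderTop) :
    (k : WithTop ℤ) ≤ (xrec ζ (m + 1) - xrec ξ (m + 1)).orderTop := by
  refine HahnSeries.le_orderTop_iff_forall.2 fun i hi ↦ ?_
  rw [coeff_xrec_succ_sub h ((WithTop.coe_lt_coe.1 hi).trans_le hk) (hi.le.trans hδ),
    HahnSeries.coeff_eq_zero_of_lt_orderTop (hi.trans_le hδ), mul_zero]

theorem le_orderTop_xrec_sub {j n : ℕ} (hjn : j < n) (h : ∀ k > j, ζ (k + 1) = ξ (k + 1)) :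
    ((-j - 1 : ℤ) : WithTop ℤ) ≤ (xrec ζ n - xrec ξ n).orderTop := by
  induction n, Nat.succ_le_of_lt hjn using Nat.le_induction with
  | base =>
    rw [show (-j - 1 : ℤ) = -((j + 1 : ℕ) : ℤ) by push_cast; ring]
    exact (le_min (le_orderTop_xrec ζ _) (le_orderTop_xrec ξ _)).trans
      HahnSeries.min_orderTop_le_orderTop_sub
  | succ m hjm ih =>
    exact le_orderTop_xrec_succ_sub (h m hjm) (by omega) (ih hjm)

theorem coeff_xrec_sub {j n : ℕ} (hjn : j < n) (h : ∀ k > j, ζ (k + 1) = ξ (k + 1)) :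
    (xrec ζ n - xrec ξ n).coeff (-j - 1) =
      ((∏ k ∈ Finset.Ioo j n, (1 + ‖ζ (k + 1)‖ ^ 2) : ℝ) : ℂ) * (ζ (j + 1) - ξ (j + 1)) := by
  rw [← Finset.Ico_succ_left_eq_Ioo]
  induction n, Nat.succ_le_of_lt hjn using Nat.le_induction with
  | base => simp [coeff_xrec_succ_neg]
  | succ m hjm ih =>
    rw [coeff_xrec_succ_sub (h m hjm) (by omega) (le_orderTop_xrec_sub hjm h), ih hjm,
      Finset.prod_Ico_succ_top (a := Order.succ j) hjm]
    push_cast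
    ring

theorem singPart_mem_continuousFamilies {X : Type*} [TopologicalSpace X]
    {f : X → LaurentSeries ℂ} (hf : f ∈ continuousFamilies X ℤ ℂ) :
    (fun x ↦ singPart (f x)) ∈ continuousFamilies X ℤ ℂ := by
  obtain ⟨F, rfl⟩ := hf
  refine ⟨HahnSeries.truncLT 0 F, funext fun x ↦ HahnSeries.ext (funext fun k ↦ ?_)⟩
  exact apply_ite (fun g : C(X, ℂ) ↦ g x) (k < 0) (F.coeff k) 0

theorem xrec_mem_continuousFamilies (n : ℕ) :
    (fun ζ : ℕ → ℂ ↦ xrec ζ n) ∈ continuousFamilies (ℕ → ℂ) ℤ ℂ := by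
  induction n with
  | zero => exact zero_mem _
  | succ m ih =>
    simp only [xrec_succ]
    refine add_mem (singPart_mem_continuousFamilies (mul_mem ?_
      (truncGeom_mem_continuousFamilies (m + 1) ?_ ih))) ?_
    all_goals exact single_mem_continuousFamilies (by fun_prop) _

end Recursion

section Phi

variable {n : ℕ} {ζ ξ : Fin n → ℂ}

/-- The sequence `ζ₁, …, ζₙ, 0, 0, …`, with first term at index `1`, to which `Phi` applies the
recursion. -/
def extendByZero (ζ : Fin n → ℂ) : ℕ → ℂ :=
  fun i ↦ if h : i - 1 < n ∧ 1 ≤ i then ζ ⟨i - 1, h.1⟩ else 0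

theorem Phi_apply (n : ℕ) (ζ : Fin n → ℂ) (j : Fin n) :
    Phi n ζ j = (xrec (extendByZero ζ) n).coeff (-(j : ℕ) - 1) :=
  rfl

theorem extendByZero_succ (ζ : Fin n → ℂ) (j : Fin n) : extendByZero ζ (j + 1) = ζ j := by
  simp [extendByZero]

theorem extendByZero_of_lt (ζ : Fin n → ℂ) {i : ℕ} (hi : n < i) : extendByZero ζ i = 0 :=
  dif_neg (by omega)

theorem continuous_extendByZero : Continuous (extendByZero (n := n)) := by
  refine continuous_pi fun i ↦ ?_
  unfold extendByZero
  split_ifs <;> fun_prop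

theorem continuous_Phi (n : ℕ) : Continuous (Phi n) :=
  continuous_pi fun _ ↦ (continuous_coeff_of_mem_continuousFamilies
    (xrec_mem_continuousFamilies n) _).comp continuous_extendByZero

theorem Phi_apply_sub_Phi_apply {j : Fin n} (h : ∀ k > j, ζ k = ξ k) :
    Phi n ζ j - Phi n ξ j =
      ((∏ k ∈ Finset.Ioi j, (1 + ‖ζ k‖ ^ 2) : ℝ) : ℂ) * (ζ j - ξ j) := by
  have hext (k : ℕ) (hk : k > j) : extendByZero ζ (k + 1) = extendByZero ξ (k + 1) := by
    rcases lt_or_ge k n with hkn | hkn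
    · exact (extendByZero_succ ζ ⟨k, hkn⟩).trans <|
        (h ⟨k, hkn⟩ hk).trans (extendByZero_succ ξ ⟨k, hkn⟩).symm
    · rw [extendByZero_of_lt ζ (by omega), extendByZero_of_lt ξ (by omega)]
  rw [Phi_apply, Phi_apply, ← HahnSeries.coeff_sub, coeff_xrec_sub j.2 hext,
    ← Fin.map_valEmbedding_Ioi, Finset.prod_map]
  simp only [Fin.valEmbedding_apply, extendByZero_succ]

theorem dependsOn_Phi_apply (j : Fin n) : DependsOn (fun ζ ↦ Phi n ζ j) (Set.Ici j) := by
  intro ζ ξ h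
  rw [← sub_eq_zero, Phi_apply_sub_Phi_apply fun k hk ↦ h k hk.le, h j Set.self_mem_Ici,
    sub_self, mul_zero]

theorem Phi_update_apply (ζ : Fin n → ℂ) (j : Fin n) (t : ℂ) :
    Phi n (Function.update ζ j t) j =
      (∏ k ∈ Finset.Ioi j, (1 + ‖ζ k‖ ^ 2)) • t + Phi n (Function.update ζ j 0) j := by
  rw [← sub_eq_iff_eq_add, Phi_apply_sub_Phi_apply, prod_Ioi_update (1 + ‖·‖ ^ 2)]
  · simp
  · intro k hk
    rw [Function.update_of_ne hk.ne', Function.update_of_ne hk.ne']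

theorem measurePreserving_Phi_update_apply (ζ : Fin n → ℂ) (j : Fin n) :
    MeasurePreserving (fun t ↦ Phi n (Function.update ζ j t) j)
      (volume.withDensity fun t ↦
        ∏ k ∈ Finset.Ioi j, ENNReal.ofReal ((1 + ‖Function.update ζ j t k‖ ^ 2) ^ 2)) volume := by
  have hslope : 0 < ∏ k ∈ Finset.Ioi j, (1 + ‖ζ k‖ ^ 2) :=
    Finset.prod_pos fun k _ ↦ by positivity
  have hdensity (t : ℂ) :
      ∏ k ∈ Finset.Ioi j, ENNReal.ofReal ((1 + ‖Function.update ζ j t k‖ ^ 2) ^ 2) =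
        ENNReal.ofReal |(∏ k ∈ Finset.Ioi j, (1 + ‖ζ k‖ ^ 2)) ^ 2| := by
    rw [prod_Ioi_update (fun z ↦ ENNReal.ofReal ((1 + ‖z‖ ^ 2) ^ 2)), abs_of_pos (pow_pos hslope 2),
      ← Finset.prod_pow, ENNReal.ofReal_prod_of_nonneg fun k _ ↦ by positivity]
  simp_rw [hdensity, withDensity_const]
  have h := measurePreserving_smul_add volume hslope.ne' (Phi n (Function.update ζ j 0) j)
  rw [Complex.finrank_real_complex] at h
  exact funext (Phi_update_apply ζ j) ▸ h

theorem measurePreserving_Phi (n : ℕ) :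
    MeasurePreserving (Phi n) (volume.withDensity fun ζ : Fin n → ℂ ↦
      ∏ j : Fin n, ENNReal.ofReal ((1 + ‖ζ j‖ ^ 2) ^ (2 * (j : ℕ)))) volume := by
  have hdensity (ζ : Fin n → ℂ) :
      ∏ j : Fin n, ENNReal.ofReal ((1 + ‖ζ j‖ ^ 2) ^ (2 * (j : ℕ))) =
        ∏ j, ∏ k ∈ Finset.Ioi j, ENNReal.ofReal ((1 + ‖ζ k‖ ^ 2) ^ 2) := by
    rw [prod_prod_Ioi_eq_prod_pow]
    refine Finset.prod_congr rfl fun j _ ↦ ?_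
    rw [pow_mul, ENNReal.ofReal_pow (by positivity)]
  simp_rw [hdensity]
  refine measurePreserving_pi_of_triangular (continuous_Phi n).measurable (fun _ ↦ by fun_prop)
    dependsOn_Phi_apply (fun j ζ ξ h ↦ ?_) fun j ζ ↦ measurePreserving_Phi_update_apply ζ j
  exact Finset.prod_congr rfl fun k hk ↦ by rw [h k (Finset.mem_Ioi.1 hk).le]

end Phi

/-- The pushforward under `Φ_n` of the measure with density
`ζ ↦ ∏_{j=1}^n (1+|ζ_j|²)^{2(j-1)}` with respect to Lebesgue measure is Lebesgue measure;
equivalently, `∫ f dλ = ∫ f(Φ_n(ζ)) ∏_j (1+|ζ_j|²)^{2(j-1)} dλ(ζ)` for every nonnegative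
measurable `f`. -/
theorem stmt14 (n : ℕ) (hn : 1 ≤ n) :
    (Measure.map (Phi n)
        (volume.withDensity (fun ζ : Fin n → ℂ =>
          ∏ j : Fin n, ENNReal.ofReal ((1 + ‖ζ j‖ ^ 2) ^ (2 * (j : ℕ)))))
      = volume)
    ∧ ∀ f : (Fin n → ℂ) → ENNReal, Measurable f →
        (∫⁻ x, f x)
          = ∫⁻ ζ : Fin n → ℂ,
              f (Phi n ζ) *
                ∏ j : Fin n, ENNReal.ofReal ((1 + ‖ζ j‖ ^ 2) ^ (2 * (j : ℕ))) := by
  have h := measurePreserving_Phi n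
  exact ⟨h.map_eq, fun f hf ↦ ((measurePreserving_withDensity_iff h.measurable
    (by fun_prop)).1 h f hf).symm⟩
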